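/- Let R ≥ 1 and for each i = 1,…,R let U_i ∈ ℂ^{N_i×K_i} with rows u_{i,1},…,u_{i,N_i}, and let F_i(A) = ∑_{j∈A} ∑_{l∈A} |⟨u_{i,j}, u_{i,l}⟩|² for A ⊆ {1,…,N_i}. Let 𝒩 be the disjoint union of the sets 𝒩_i = {1,…,N_i}, and for S ⊆ 𝒩 write S_i = S ∩ 𝒩_i. Define G(S) = ∏_{i=1}^R F_i(𝒩_i) − ∏_{i=1}^R F_i(𝒩_i ∖ S_i). Then G is submodular: for every S ⊆ 𝒩 and distinct x, y ∈ 𝒩 ∖ S, G(S ∪ {x}) − G(S) ≥ G(S ∪ {x,y}) − G(S ∪ {y}). -/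

import Mathlib

/-!
Each `F_i` is a sum of nonnegative weights over `A × A`; since `A × A ∪ B × B ⊆ (A ∪ B) × (A ∪ B)`,
with equality for intersections, it is supermodular, besides being nonnegative and monotone. These
three properties together are inherited by products. Complementation exchanges `∪` and `∩`, so it
preserves supermodularity, and the sign in the definition of `G` turns it into submodularity.
-/

open scoped BigOperators

/-- Per-domain frame potential set function:
`F_i(A) = ∑_{j∈A} ∑_{l∈A} |⟨u_{i,j}, u_{i,l}⟩|²`. -/
noncomputable def frameSetFun {n k : ℕ} (U : Matrix (Fin n) (Fin k) ℂ)
    (A : Finset (Fin n)) : ℝ :=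
  ∑ j ∈ A, ∑ l ∈ A, ‖∑ c, star (U j c) * U l c‖ ^ 2

/-- `G(S) = ∏_i F_i(𝒩_i) − ∏_i F_i(𝒩_i ∖ S_i)`, where the ground set `𝒩` is
the disjoint union of the per-domain index sets `𝒩_i` (modeled by a sigma
type) and `S_i` is the part of `S` lying in domain `i`. -/
noncomputable def G {R : ℕ} {N K : Fin R → ℕ}
    (U : ∀ i, Matrix (Fin (N i)) (Fin (K i)) ℂ)
    (S : Finset (Σ i : Fin R, Fin (N i))) : ℝ :=
  (∏ i, frameSetFun (U i) Finset.univ) -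
    ∏ i, frameSetFun (U i)
      (Finset.univ.filter fun j : Fin (N i) => (⟨i, j⟩ : Σ i, Fin (N i)) ∉ S)

section

variable {L M : Type*} [Lattice L] [Add M] [LE M]

/-- Supermodularity of a function on a lattice, by the two-point inequality. On finite sets this is
equivalent to marginal gains being increasing; the lattice form makes complementation a matter of
order duality. -/
def Supermodular (f : L → M) : Prop :=
  ∀ a b, f a + f b ≤ f (a ⊓ b) + f (a ⊔ b)

/-- Submodularity of a function on a lattice, by the two-point inequality; diminishing returns
on finite sets are derived from it in `Submodular.insert_sub_le_insert_sub`. -/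
def Submodular (f : L → M) : Prop :=
  ∀ a b, f (a ⊓ b) + f (a ⊔ b) ≤ f a + f b

end

theorem Submodular.insert_sub_le_insert_sub {α M : Type*} [DecidableEq α] [AddCommGroup M]
    [PartialOrder M] [IsOrderedAddMonoid M] {f : Finset α → M} (hf : Submodular f)
    {S T : Finset α} (hST : S ⊆ T) {x : α} (hx : x ∉ T) :
    f (insert x T) - f T ≤ f (insert x S) - f S := by
  have h_inter : insert x S ∩ T = S := by
    rw [Finset.insert_inter_of_notMem hx, Finset.inter_eq_left.mpr hST]
  have h_union : insert x S ∪ T = insert x T := by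
    rw [Finset.insert_union, Finset.union_eq_right.mpr hST]
  have h := hf (insert x S) T
  rw [Finset.inf_eq_inter, Finset.sup_eq_union, h_inter, h_union] at h
  rwa [sub_le_sub_iff, add_comm (f (insert x T))]

namespace Supermodular

theorem const_sub {L M : Type*} [Lattice L] [AddCommGroup M] [PartialOrder M]
    [IsOrderedAddMonoid M] {f : L → M} (hf : Supermodular f) (c : M) :
    Submodular fun a => c - f a := by
  intro a b
  simp only [sub_add_sub_comm]
  exact sub_le_sub_left (hf a b) (c + c)

theorem comp_compl {B M : Type*} [BooleanAlgebra B] [AddCommMagma M] [LE M] {f : B → M}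
    (hf : Supermodular f) : Supermodular fun a => f aᶜ := by
  intro a b
  simpa only [compl_inf, compl_sup, add_comm] using hf aᶜ bᶜ

theorem comp_preimage {α β M : Type*} [DecidableEq α] [DecidableEq β] [Add M] [LE M]
    {f : Finset α → M} (hf : Supermodular f) {e : α → β} (he : Function.Injective e) :
    Supermodular fun S : Finset β => f (S.preimage e he.injOn) := by
  intro S T
  simpa only [Finset.inf_eq_inter, Finset.sup_eq_union, Finset.preimage_inter he.injOn he.injOn,
    Finset.preimage_union] using hf (S.preimage e he.injOn) (T.preimage e he.injOn)

section Product

variable {L M : Type*} [Lattice L] [CommRing M] [PartialOrder M] [IsOrderedRing M]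

theorem mul {f g : L → M} (hf : Supermodular f) (hg : Supermodular g)
    (hf_mono : Monotone f) (hg_mono : Monotone g) (hf_nonneg : ∀ a, 0 ≤ f a)
    (hg_nonneg : ∀ a, 0 ≤ g a) : Supermodular fun a => f a * g a := by
  intro a b
  have hfa : 0 ≤ f a - f (a ⊓ b) := sub_nonneg.mpr (hf_mono inf_le_left)
  have hfb : 0 ≤ f b - f (a ⊓ b) := sub_nonneg.mpr (hf_mono inf_le_right)
  have hga : 0 ≤ g a - g (a ⊓ b) := sub_nonneg.mpr (hg_mono inf_le_left)
  have hgb : 0 ≤ g b - g (a ⊓ b) := sub_nonneg.mpr (hg_mono inf_le_right)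
  have hf_sup : f a + (f b - f (a ⊓ b)) ≤ f (a ⊔ b) := by
    rw [← add_sub_assoc, sub_le_iff_le_add']
    exact hf a b
  have hg_sup : g a + (g b - g (a ⊓ b)) ≤ g (a ⊔ b) := by
    rw [← add_sub_assoc, sub_le_iff_le_add']
    exact hg a b
  calc f a * g a + f b * g b
      ≤ f a * g a + f b * g b + ((f a - f (a ⊓ b)) * (g b - g (a ⊓ b)) +
          (f b - f (a ⊓ b)) * (g a - g (a ⊓ b))) :=
        le_add_of_nonneg_right (add_nonneg (mul_nonneg hfa hgb) (mul_nonneg hfb hga))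
    _ = f (a ⊓ b) * g (a ⊓ b) +
          (f a + (f b - f (a ⊓ b))) * (g a + (g b - g (a ⊓ b))) := by ring
    _ ≤ f (a ⊓ b) * g (a ⊓ b) + f (a ⊔ b) * g (a ⊔ b) :=
        add_le_add_right (mul_le_mul hf_sup hg_sup (add_nonneg (hg_nonneg a) hgb)
          (hf_nonneg (a ⊔ b))) _

theorem prod {ι : Type*} (s : Finset ι) {f : ι → L → M} (hf : ∀ i, Supermodular (f i))
    (hf_mono : ∀ i, Monotone (f i)) (hf_nonneg : ∀ i a, 0 ≤ f i a) :
    Supermodular fun a => ∏ i ∈ s, f i a := by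
  classical
  induction s using Finset.induction_on with
  | empty => exact fun _ _ => by simp only [Finset.prod_empty, le_refl]
  | insert i s hi ih =>
    have h_mono : Monotone fun a => ∏ j ∈ s, f j a := fun a b hab =>
      Finset.prod_le_prod (fun j _ => hf_nonneg j a) fun j _ => hf_mono j hab
    have h_nonneg (a : L) : 0 ≤ ∏ j ∈ s, f j a := Finset.prod_nonneg fun j _ => hf_nonneg j a
    simpa only [Finset.prod_insert hi] using
      (hf i).mul ih (hf_mono i) h_mono (hf_nonneg i) h_nonneg

end Product

end Supermodular

section SumSum

variable {α M : Type*} [AddCommMonoid M] [PartialOrder M] [IsOrderedAddMonoid M] {k : α → α → M}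

theorem monotone_sum_sum (hk : ∀ a b, 0 ≤ k a b) :
    Monotone fun A : Finset α => ∑ a ∈ A, ∑ b ∈ A, k a b := by
  intro A B hAB
  simp only [← Finset.sum_product']
  exact Finset.sum_le_sum_of_subset_of_nonneg (Finset.product_subset_product hAB hAB)
    fun p _ _ => hk p.1 p.2

theorem supermodular_sum_sum [DecidableEq α] (hk : ∀ a b, 0 ≤ k a b) :
    Supermodular fun A : Finset α => ∑ a ∈ A, ∑ b ∈ A, k a b := by
  intro A B
  have h_inter : A ×ˢ A ∩ B ×ˢ B = (A ∩ B) ×ˢ (A ∩ B) := Finset.product_inter_product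
  have h_union : A ×ˢ A ∪ B ×ˢ B ⊆ (A ∪ B) ×ˢ (A ∪ B) :=
    Finset.union_subset
      (Finset.product_subset_product Finset.subset_union_left Finset.subset_union_left)
      (Finset.product_subset_product Finset.subset_union_right Finset.subset_union_right)
  simp only [← Finset.sum_product', Finset.inf_eq_inter, Finset.sup_eq_union]
  rw [← Finset.sum_union_inter, h_inter, add_comm]
  exact add_le_add_right
    (Finset.sum_le_sum_of_subset_of_nonneg h_union fun p _ _ => hk p.1 p.2) _

end SumSum

section FrameSetFun

variable {n k : ℕ} (U : Matrix (Fin n) (Fin k) ℂ)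

theorem frameSetFun_nonneg (A : Finset (Fin n)) : 0 ≤ frameSetFun U A :=
  Finset.sum_nonneg fun _ _ => Finset.sum_nonneg fun _ _ => sq_nonneg _

theorem monotone_frameSetFun : Monotone (frameSetFun U) :=
  monotone_sum_sum fun _ _ => sq_nonneg _

theorem supermodular_frameSetFun : Supermodular (frameSetFun U) :=
  supermodular_sum_sum fun _ _ => sq_nonneg _

end FrameSetFun

theorem G_submodular_general {ι M : Type*} [Fintype ι] [DecidableEq ι] {α : ι → Type*}
    [∀ i, Fintype (α i)] [∀ i, DecidableEq (α i)] [CommRing M] [PartialOrder M] [IsOrderedRing M]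
    {f : ∀ i, Finset (α i) → M} (hf : ∀ i, Supermodular (f i)) (hf_mono : ∀ i, Monotone (f i))
    (hf_nonneg : ∀ i A, 0 ≤ f i A) (c : M) :
    Submodular fun S : Finset (Σ i, α i) =>
      c - ∏ i, f i (Finset.univ.filter fun j : α i => (⟨i, j⟩ : Σ i, α i) ∉ S) := by
  have h_slice (i : ι) (S : Finset (Σ i, α i)) :
      (Finset.univ.filter fun j : α i => (⟨i, j⟩ : Σ i, α i) ∉ S) =
        Sᶜ.preimage (Sigma.mk i) sigma_mk_injective.injOn := by
    ext j
    simp only [Finset.mem_filter_univ, Finset.mem_preimage, Finset.mem_compl]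
  simp only [h_slice]
  have h_prod : Supermodular fun A : Finset (Σ i, α i) =>
      ∏ i, f i (A.preimage (Sigma.mk i) sigma_mk_injective.injOn) :=
    Supermodular.prod Finset.univ (fun i => (hf i).comp_preimage sigma_mk_injective)
      (fun i => (hf_mono i).comp (Finset.monotone_preimage sigma_mk_injective))
      fun i _ => hf_nonneg i _
  exact h_prod.comp_compl.const_sub c

theorem submodular_G {R : ℕ} {N K : Fin R → ℕ} (U : ∀ i, Matrix (Fin (N i)) (Fin (K i)) ℂ) :
    Submodular (G U) :=
  G_submodular_general (fun i => supermodular_frameSetFun (U i))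
    (fun i => monotone_frameSetFun (U i)) (fun i => frameSetFun_nonneg (U i)) _

/-- `G` is submodular. -/
theorem G_submodular (R : ℕ) (hR : 1 ≤ R) (N K : Fin R → ℕ)
    (U : ∀ i, Matrix (Fin (N i)) (Fin (K i)) ℂ) :
    ∀ (S : Finset (Σ i : Fin R, Fin (N i))) (x y : Σ i : Fin R, Fin (N i)),
      x ∉ S → y ∉ S → x ≠ y →
      G U (insert x S) - G U S ≥
        G U (insert y (insert x S)) - G U (insert y S) := by
  intro S x y hx _ hxy
  rw [Finset.insert_comm y x S]
  exact (submodular_G U).insert_sub_le_insert_sub (Finset.subset_insert y S)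
    (Finset.mem_insert.not.mpr (not_or.mpr ⟨hxy, hx⟩))
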